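/- Let N ≥ 1 and let (ω_j, α_j, φ_j), j = 1, …, N, be parameters with ω_j ∈ ℝ^m and α_j, φ_j ∈ ℝ. Then there exists a function c : {−1, 1}^N → ℝ (independent of x) such that for every x ∈ ℝ^m, the entry ⟨1| U^{UAT}(x; ω_N, α_N, φ_N) · ⋯ · U^{UAT}(x; ω_1, α_1, φ_1) |0⟩ equals Σ_{ε ∈ {−1,1}^N} c(ε) · exp(i · Σ_{j=1}^N ε_j (ω_j·x + α_j)). -/

import Mathlib

/-!
Left multiplication by a gate `R_z(2θ) R_y(2φ)` first takes real linear combinations of the rows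
(`R_y` is a real matrix) and then multiplies row `0` by `exp (iθ)` and row `1` by `exp (-iθ)`
(`R_z` is diagonal). Hence, by induction on the number of gates, each entry of column `0` of the
circuit is a real combination of the exponentials `exp (i ∑ ε_j θ_j)`, with coefficients depending
only on the angles `φ_j`. The induction has to carry both rows at once; this is `exists_coeff`.
-/

open scoped Matrix

/-- Single-qubit rotation about the y-axis. -/
noncomputable def Ry (θ : ℝ) : Matrix (Fin 2) (Fin 2) ℂ :=
  !![(Real.cos (θ / 2) : ℂ), -(Real.sin (θ / 2) : ℂ);
     (Real.sin (θ / 2) : ℂ), (Real.cos (θ / 2) : ℂ)]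

/-- Single-qubit rotation about the z-axis. -/
noncomputable def Rz (θ : ℝ) : Matrix (Fin 2) (Fin 2) ℂ :=
  !![Complex.exp (Complex.I * (θ / 2)), 0;
     0, Complex.exp (-(Complex.I * (θ / 2)))]

/-- The fundamental UAT gate `U^{UAT}(x; ω, α, φ) = R_z(2(ω·x + α)) · R_y(2φ)`. -/
noncomputable def Uuat {m : ℕ} (x ω : Fin m → ℝ) (α φ : ℝ) : Matrix (Fin 2) (Fin 2) ℂ :=
  Rz (2 * ((∑ i, ω i * x i) + α)) * Ry (2 * φ)

/-- The ordered product `f (n-1) * ⋯ * f 1 * f 0`. -/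
noncomputable def prodRev {n : ℕ} (f : Fin n → Matrix (Fin 2) (Fin 2) ℂ) :
    Matrix (Fin 2) (Fin 2) ℂ :=
  (List.ofFn fun j => f j.rev).prod

/-- A sign `ε ∈ {−1, 1}` encoded by a boolean. -/
def sgn (b : Bool) : ℝ := if b then 1 else -1

/-- Peeling off the gate that acts last, i.e. the leftmost factor. -/
lemma prodRev_succ {n : ℕ} (f : Fin (n + 1) → Matrix (Fin 2) (Fin 2) ℂ) :
    prodRev f = f (Fin.last n) * prodRev fun j : Fin n => f j.castSucc := by
  simp [prodRev, List.ofFn_succ, Fin.rev_succ]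

/-- The sign with which the phase of `R_z` enters row `a`: `true` (`+1`) for row `0` and
`false` (`-1`) for row `1`. -/
def rowSign (a : Fin 2) : Bool := decide (a = 0)

/-- The real entries of `R_y(2φ)`. -/
noncomputable def rot (φ : ℝ) : Matrix (Fin 2) (Fin 2) ℝ :=
  !![Real.cos φ, -Real.sin φ; Real.sin φ, Real.cos φ]

lemma gate_mul_apply (θ φ : ℝ) (M : Matrix (Fin 2) (Fin 2) ℂ) (a b : Fin 2) :
    (Rz (2 * θ) * Ry (2 * φ) * M) a b =
      Complex.exp (Complex.I * ((sgn (rowSign a) * θ : ℝ) : ℂ)) *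
        ∑ k, (rot φ a k : ℂ) * M k b := by
  fin_cases a <;>
    simp [Rz, Ry, rot, rowSign, sgn, Matrix.mul_apply, Fin.sum_univ_two] <;> ring

/-- Both entries of column `0` of the circuit are exponential sums over sign vectors, with real
coefficients that depend only on the angles `φ`, not on the phases `θ`. -/
lemma exists_coeff {n : ℕ} (φ : Fin n → ℝ) :
    ∃ c : Fin 2 → (Fin n → Bool) → ℝ, ∀ (θ : Fin n → ℝ) (a : Fin 2),
      (prodRev fun j => Rz (2 * θ j) * Ry (2 * φ j)) a 0 =
        ∑ ε : Fin n → Bool, (c a ε : ℂ) *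
          Complex.exp (Complex.I * ((∑ j, sgn (ε j) * θ j : ℝ) : ℂ)) := by
  induction n with
  | zero =>
    refine ⟨fun a _ => if a = 0 then 1 else 0, fun θ a => ?_⟩
    fin_cases a <;> simp [prodRev]
  | succ n ih =>
    obtain ⟨c, hc⟩ := ih fun j => φ j.castSucc
    -- Row `a` only carries sign vectors whose last sign is that of row `a`.
    refine ⟨fun a ε => if ε (Fin.last n) = rowSign a then
      ∑ k, rot (φ (Fin.last n)) a k * c k (Fin.init ε) else 0, fun θ a => ?_⟩
    rw [prodRev_succ, gate_mul_apply, ← (Fin.snocEquiv fun _ => Bool).sum_comp,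
      Fintype.sum_prod_type, Finset.sum_eq_single (rowSign a)]
    · simp only [hc fun j => θ j.castSucc, Fin.snocEquiv, Equiv.coe_fn_mk, Fin.snoc_last,
        Fin.init_snoc, if_true, Fin.sum_univ_castSucc (n := n), Fin.snoc_castSucc,
        Fin.sum_univ_two, Finset.mul_sum, ← Finset.sum_add_distrib]
      refine Finset.sum_congr rfl fun ε _ => ?_
      push_cast
      rw [mul_add Complex.I, Complex.exp_add]
      ring
    · intro s _ hs
      simp [Fin.snocEquiv, hs]
    · simp

/-- The `⟨1|·|0⟩` entry of an `N`-gate UAT circuit is an exponential sum over all sign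
choices `ε ∈ {−1,1}^N`, with phases `Σ_j ε_j (ω_j·x + α_j)` and real `x`-independent
coefficients. -/
theorem Uuat_circuit_exp_sum {m : ℕ} (N : ℕ) (hN : 1 ≤ N)
    (ω : Fin N → Fin m → ℝ) (α φ : Fin N → ℝ) :
    ∃ c : (Fin N → Bool) → ℝ,
      ∀ x : Fin m → ℝ,
        (prodRev fun j => Uuat x (ω j) (α j) (φ j)) 1 0 =
          ∑ ε : Fin N → Bool,
            (c ε : ℂ) *
              Complex.exp (Complex.I *
                ((∑ j, sgn (ε j) * ((∑ i, ω j i * x i) + α j) : ℝ) : ℂ)) := by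
  obtain ⟨c, hc⟩ := exists_coeff φ
  exact ⟨c 1, fun x => hc (fun j => (∑ i, ω j i * x i) + α j) 1⟩
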